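/- Let f : (ℕ→ℕ) → Set ℕ be a first-order problem such that for every n ∈ ℕ the set {p | n ∈ f p} is a Borel subset of Baire space (a measurable set for the Borel σ-algebra of ℕ→ℕ). Then exactly one of the following holds: (1) f ≤_W* C_ℕ; (2) Π⁰₂ACC_ℕ ≤_W* f. -/

import Mathlib

/-- The domain of a first-order problem. -/
def domFO (f : (ℕ → ℕ) → Set ℕ) : Set (ℕ → ℕ) := {p | f p ≠ ∅}

/-- Continuous Weihrauch reducibility between first-order problems. -/
def RedFOFO (f g : (ℕ → ℕ) → Set ℕ) : Prop :=
  ∃ (H : (ℕ → ℕ) → (ℕ → ℕ)) (K : (ℕ → ℕ) × ℕ → ℕ),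
    ContinuousOn H (domFO f) ∧
    ContinuousOn K {pn : (ℕ → ℕ) × ℕ | pn.1 ∈ domFO f ∧ pn.2 ∈ g (H pn.1)} ∧
    (∀ p ∈ domFO f, H p ∈ domFO g) ∧
    (∀ p ∈ domFO f, ∀ n ∈ g (H p), K (p, n) ∈ f p)

/-- Closed choice on the naturals: find a number that is never enumerated out
(`p k = n + 1` removes `n`), on the domain where some number survives. -/
def CN (p : ℕ → ℕ) : Set ℕ := {n | ∀ k, p k ≠ n + 1}

/-- `Π⁰₂ACC_ℕ`: find a number to which the input sequence does not converge. -/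
def Pi02ACCN (p : ℕ → ℕ) : Set ℕ := {k | ¬ ∃ N, ∀ n ≥ N, p n = k}

open Set Filter Topology

theorem cnd_ev (p : ℕ → ℕ) (N : ℕ) : ∀ᶠ q in 𝓝 p, ∀ j < N, q j = p j := by
  have h : PiNat.cylinder (E := fun _ => ℕ) p N ∈ 𝓝 p :=
    (PiNat.isOpen_cylinder (fun _ => ℕ) p N).mem_nhds (PiNat.self_mem_cylinder p N)
  filter_upwards [h] with q hq
  exact fun j hj => PiNat.mem_cylinder_iff.1 hq j hj

theorem cnd_sub {p : ℕ → ℕ} {s : Set (ℕ → ℕ)} (hs : s ∈ 𝓝 p) :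
    ∃ N, ∀ q : ℕ → ℕ, (∀ j < N, q j = p j) → q ∈ s := by
  obtain ⟨t, ⟨x, n, rfl⟩, hp, ht⟩ :=
    (PiNat.isTopologicalBasis_cylinders (fun _ => ℕ)).mem_nhds_iff.1 hs
  refine ⟨n, fun q hq => ht ?_⟩
  rw [PiNat.mem_cylinder_iff] at hp ⊢
  intro i hi
  rw [hq i hi, hp i hi]

theorem cnd_cont (g : (ℕ → ℕ) → ℕ) (N : ℕ)
    (h : ∀ p q : ℕ → ℕ, (∀ j < N, q j = p j) → g q = g p) : Continuous g := by
  apply IsLocallyConstant.continuous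
  rw [IsLocallyConstant.iff_eventually_eq]
  intro p
  filter_upwards [cnd_ev p N] with q hq using h p q hq

/-- The sigma-ideal generated by closed sets on which `f` has a constant solution. -/
def CndSmall (f : (ℕ → ℕ) → Set ℕ) (Y : Set (ℕ → ℕ)) : Prop :=
  ∃ C : Set (Set (ℕ → ℕ) × ℕ), C.Countable ∧
    (∀ c ∈ C, IsClosed c.1 ∧ ∀ x ∈ c.1, x ∈ domFO f → c.2 ∈ f x) ∧
    ∀ y ∈ Y, ∃ c ∈ C, y ∈ c.1

theorem cnd_small_union {ι : Type*} (f : (ℕ → ℕ) → Set ℕ) (A : Set ι) (hA : A.Countable)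
    (Y : ι → Set (ℕ → ℕ)) (h : ∀ a ∈ A, CndSmall f (Y a)) (W : Set (ℕ → ℕ))
    (hW : ∀ w ∈ W, ∃ a ∈ A, w ∈ Y a) : CndSmall f W := by
  choose! C hC1 hC2 hC3 using h
  refine ⟨⋃ a ∈ A, C a, hA.biUnion hC1, ?_, ?_⟩
  · intro c hc
    simp only [mem_iUnion] at hc
    obtain ⟨a, ha, hc⟩ := hc
    exact hC2 a ha c hc
  · intro w hw
    obtain ⟨a, ha, hwa⟩ := hW w hw
    obtain ⟨c, hc, hwc⟩ := hC3 a ha w hwa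
    exact ⟨c, by simp only [mem_iUnion]; exact ⟨a, ha, hc⟩, hwc⟩

open Classical in
theorem cnd_red_of_small (f : (ℕ → ℕ) → Set ℕ) (h : CndSmall f (domFO f)) : RedFOFO f CN := by
  obtain ⟨C, hC1, hC2, hC3⟩ := h
  obtain ⟨e, he⟩ := (hC1.insert (∅, 0)).exists_eq_range (insert_nonempty _ _)
  have hcl : ∀ i, IsClosed (e i).1 ∧ ∀ x ∈ (e i).1, x ∈ domFO f → (e i).2 ∈ f x := by
    intro i
    have : e i ∈ insert (∅, 0) C := he ▸ mem_range_self i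
    rcases this with h | h
    · rw [h]; simp
    · exact hC2 _ h
  have hcov : ∀ y ∈ domFO f, ∃ i, y ∈ (e i).1 := by
    intro y hy
    obtain ⟨c, hc, hyc⟩ := hC3 y hy
    have : c ∈ range e := he ▸ mem_insert_of_mem _ hc
    obtain ⟨i, rfl⟩ := this
    exact ⟨i, hyc⟩
  let H : (ℕ → ℕ) → ℕ → ℕ := fun p j =>
    if ∃ q ∈ (e j.unpair.1).1, ∀ l < j.unpair.2, q l = p l then 0 else j.unpair.1 + 1
  have hH : ∀ p i, i ∈ CN (H p) ↔ p ∈ (e i).1 := by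
    intro p i
    constructor
    · intro hi
      rw [← (hcl i).1.closure_eq, mem_closure_iff_nhds]
      intro s hs
      obtain ⟨N, hN⟩ := cnd_sub hs
      have := hi (Nat.pair i N)
      by_contra hne
      apply this
      simp only [H, Nat.unpair_pair]
      rw [if_neg]
      rintro ⟨q, hq, hql⟩
      exact hne ⟨q, hN q hql, hq⟩
    · intro hp j hj
      simp only [H] at hj
      split_ifs at hj with h1
      · apply h1
        have : j.unpair.1 = i := by omega
        rw [this]
        exact ⟨p, hp, fun _ _ => rfl⟩
  refine ⟨H, fun pn => (e pn.2).2, ?_, ?_, ?_, ?_⟩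
  · apply Continuous.continuousOn
    refine continuous_pi fun j => cnd_cont _ j.unpair.2 ?_
    intro p q hpq
    simp only [H]
    have : (∃ q' ∈ (e j.unpair.1).1, ∀ l < j.unpair.2, q' l = q l) ↔
        (∃ q' ∈ (e j.unpair.1).1, ∀ l < j.unpair.2, q' l = p l) := by
      constructor
      · rintro ⟨r, hr, h⟩
        exact ⟨r, hr, fun l hl => (h l hl).trans (hpq l hl)⟩
      · rintro ⟨r, hr, h⟩
        exact ⟨r, hr, fun l hl => (h l hl).trans (hpq l hl).symm⟩
    simp only [this]
  · apply Continuous.continuousOn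
    exact (continuous_of_discreteTopology (f := fun n : ℕ => (e n).2)).comp continuous_snd
  · intro p hp
    obtain ⟨i, hi⟩ := hcov p hp
    exact nonempty_iff_ne_empty.1 ⟨i, (hH p i).2 hi⟩
  · intro p hp n hn
    exact (hcl n).2 p ((hH p n).1 hn) hp

theorem cnd_pi_total (p : ℕ → ℕ) : p ∈ domFO Pi02ACCN := by
  apply nonempty_iff_ne_empty.1
  by_cases h : ∃ N, ∀ n ≥ N, p n = 0
  · refine ⟨1, ?_⟩
    rintro ⟨M, hM⟩
    obtain ⟨N, hN⟩ := h
    have h1 := hN (max M N) (le_max_right _ _)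
    have h2 := hM (max M N) (le_max_left _ _)
    omega
  · exact ⟨0, h⟩

theorem cnd_not_both (f : (ℕ → ℕ) → Set ℕ) (h1 : RedFOFO f CN) (h2 : RedFOFO Pi02ACCN f) :
    False := by
  obtain ⟨H, K, hH, hK, hd, hs⟩ := h1
  obtain ⟨G, L, hG, hL, gd, gs⟩ := h2
  have hGc : Continuous G := by
    rw [← continuousOn_univ]
    exact hG.mono fun p _ => cnd_pi_total p
  have hHG : Continuous fun p => H (G p) :=
    hH.comp_continuous hGc fun p => gd p (cnd_pi_total p)
  let A : ℕ → Set (ℕ → ℕ) := fun n => {p | n ∈ CN (H (G p))}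
  have hAc : ∀ n, IsClosed (A n) := by
    intro n
    have : A n = ⋂ k, {p | H (G p) k ≠ n + 1} := by
      ext p; simp [A, CN]
    rw [this]
    refine isClosed_iInter fun k => ?_
    exact (isClosed_discrete {m : ℕ | m ≠ n + 1}).preimage ((continuous_apply k).comp hHG)
  have hAu : ⋃ n, A n = univ := by
    rw [eq_univ_iff_forall]
    intro p
    obtain ⟨n, hn⟩ := nonempty_iff_ne_empty.2 (hd (G p) (gd p (cnd_pi_total p)))
    exact mem_iUnion.2 ⟨n, hn⟩
  obtain ⟨n, p, hp⟩ := nonempty_interior_of_iUnion_of_closed hAc hAu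
  have hpA : A n ∈ 𝓝 p := mem_interior_iff_mem_nhds.1 hp
  have hc1 : ContinuousOn (fun q => K (G q, n)) (A n) := by
    refine hK.comp (Continuous.continuousOn (by fun_prop)) ?_
    intro q hq
    exact ⟨gd q (cnd_pi_total q), hq⟩
  have hc2 : ContinuousOn (fun q => L (q, K (G q, n))) (A n) := by
    refine hL.comp (continuousOn_id.prodMk hc1) ?_
    intro q hq
    exact ⟨cnd_pi_total q, hs _ (gd q (cnd_pi_total q)) n hq⟩
  have hc3 : ContinuousAt (fun q => L (q, K (G q, n))) p := hc2.continuousAt hpA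
  have hev : ∀ᶠ q in 𝓝 p, L (q, K (G q, n)) = L (p, K (G p, n)) :=
    hc3.eventually ((isOpen_discrete {L (p, K (G p, n))}).mem_nhds rfl)
  obtain ⟨N, hN⟩ := cnd_sub (hev.and hpA)
  let k := L (p, K (G p, n))
  let q : ℕ → ℕ := fun j => if j < N then p j else k
  obtain ⟨hq1, hq2⟩ := hN q (fun j hj => by simp [q, hj])
  have := gs q (cnd_pi_total q) _ (hs _ (gd q (cnd_pi_total q)) n hq2)
  rw [hq1] at this
  apply this
  refine ⟨N, fun j hj => ?_⟩
  simp [q, k, not_lt.2 hj]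

/-- State of the construction: current witness, radius, current target. -/
structure CndState where
  z : ℕ → ℕ
  m : ℕ
  x : ℕ → ℕ

theorem cnd_construct (f : (ℕ → ℕ) → Set ℕ) (π : (ℕ → ℕ) → (ℕ → ℕ)) (hπ : Continuous π)
    (hπX : ∀ z, π z ∈ domFO f) (P : CndState → Prop) (Z : Set (ℕ → ℕ))
    (hinit : ∀ k, ∃ s, P s ∧ s.x ∈ domFO f ∧ k ∉ f s.x)
    (hstep : ∀ (i k : ℕ) (s : CndState), P s → ∃ s', P s' ∧ s'.x ∈ domFO f ∧ k ∉ f s'.x ∧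
      (∀ j < s.m, s'.z j = s.z j) ∧ s.m < s'.m ∧ (∀ j ≤ i, π s'.z j = s'.x j) ∧
      (∀ j ≤ i, s'.x j = s.x j)) : RedFOFO Pi02ACCN f := by
  choose s0 hs0 using hinit
  choose! nx hnx using hstep
  let S : (ℕ → ℕ) → ℕ → CndState := fun p i =>
    Nat.rec (s0 (p 0)) (fun i s => if p (i + 1) = p i then s else nx i (p (i + 1)) s) i
  have S0 : ∀ p, S p 0 = s0 (p 0) := fun p => rfl
  have S1 : ∀ p i, S p (i + 1) = if p (i + 1) = p i then S p i else nx i (p (i + 1)) (S p i) :=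
    fun p i => rfl
  have SP : ∀ p i, P (S p i) ∧ (S p i).x ∈ domFO f ∧ p i ∉ f (S p i).x := by
    intro p i
    induction i with
    | zero => exact hs0 (p 0)
    | succ i ih =>
      rw [S1]
      split_ifs with h
      · rw [h]; exact ih
      · have := hnx i (p (i + 1)) _ ih.1
        exact ⟨this.1, this.2.1, this.2.2.1⟩
  have Sdep : ∀ p q i, (∀ j < i + 1, q j = p j) → S q i = S p i := by
    intro p q i
    induction i with
    | zero => intro h; rw [S0, S0, h 0 (by omega)]
    | succ i ih =>
      intro h
      rw [S1, S1, ih fun j hj => h j (by omega), h (i + 1) (by omega), h i (by omega)]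
  have Sx : ∀ p i d, ∀ j ≤ i, (S p (i + d)).x j = (S p i).x j := by
    intro p i d j hj
    induction d with
    | zero => rfl
    | succ d ih =>
      rw [← ih, ← add_assoc, S1]
      split_ifs with h
      · rfl
      · exact (hnx (i + d) (p (i + d + 1)) _ (SP p (i + d)).1).2.2.2.2.2.2 j (by omega)
  have Sz : ∀ p i d, (S p i).m ≤ (S p (i + d)).m ∧
      ∀ j < (S p i).m, (S p (i + d)).z j = (S p i).z j := by
    intro p i d
    induction d with
    | zero => exact ⟨le_rfl, fun _ _ => rfl⟩
    | succ d ih =>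
      rw [← add_assoc, S1]
      split_ifs with h
      · exact ih
      · have := (hnx (i + d) (p (i + d + 1)) _ (SP p (i + d)).1).2.2.2
        refine ⟨ih.1.trans this.2.1.le, fun j hj => ?_⟩
        rw [this.1 j (hj.trans_le ih.1), ih.2 j hj]
  let H : (ℕ → ℕ) → ℕ → ℕ := fun p i => (S p i).x i
  have Hx : ∀ p i, ∀ j ≤ i, H p j = (S p i).x j := by
    intro p i j hj
    obtain ⟨d, rfl⟩ := Nat.exists_eq_add_of_le hj
    exact (Sx p j d j le_rfl).symm
  have Hlim : ∀ p k N, (∀ n ≥ N, p n = k) → H p ∈ domFO f ∧ k ∉ f (H p) := by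
    intro p k N hN
    have hc : ∀ d, S p (N + d) = S p N := by
      intro d
      induction d with
      | zero => rfl
      | succ d ih =>
        rw [← add_assoc, S1, if_pos, ih]
        rw [hN _ (by omega), hN _ (by omega)]
    have : H p = (S p N).x := by
      funext j
      rw [Hx p (N + j) j (by omega), hc]
    rw [this, ← hN N le_rfl]
    exact (SP p N).2
  have Hdom : ∀ p, H p ∈ domFO f := by
    intro p
    by_cases hconv : ∃ N, ∀ i ≥ N, p (i + 1) = p i
    · obtain ⟨N, hN⟩ := hconv
      refine (Hlim p (p N) N ?_).1
      intro n hn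
      induction n, hn using Nat.le_induction with
      | base => rfl
      | succ n hn ih => rw [hN n hn, ih]
    · push Not at hconv
      have hm : ∀ j, ∃ i, j < (S p i).m := by
        intro j
        induction j with
        | zero =>
          obtain ⟨i, _, hi⟩ := hconv 0
          refine ⟨i + 1, ?_⟩
          rw [S1, if_neg hi]
          have := (hnx i (p (i + 1)) _ (SP p i).1).2.2.2.2.1
          omega
        | succ j ih =>
          obtain ⟨i0, hi0⟩ := ih
          obtain ⟨i, hii, hi⟩ := hconv i0
          obtain ⟨d, rfl⟩ := Nat.exists_eq_add_of_le hii
          refine ⟨i0 + d + 1, ?_⟩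
          rw [S1, if_neg hi]
          have := (hnx (i0 + d) (p (i0 + d + 1)) _ (SP p (i0 + d)).1).2.2.2.2.1
          have := (Sz p i0 d).1
          omega
      choose N hN using hm
      let z : ℕ → ℕ := fun j => (S p (N j)).z j
      have hz : Tendsto (fun i => (S p i).z) atTop (𝓝 z) := by
        rw [tendsto_pi_nhds]
        intro j
        apply tendsto_const_nhds.congr'
        filter_upwards [eventually_ge_atTop (N j)] with i hi
        obtain ⟨d, rfl⟩ := Nat.exists_eq_add_of_le hi
        exact ((Sz p (N j) d).2 j (hN j)).symm
      have hπz : Tendsto (fun i => π (S p i).z) atTop (𝓝 (π z)) := (hπ.tendsto z).comp hz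
      have : H p = π z := by
        funext j
        have h1 : ∀ᶠ i in atTop, π (S p i).z j = π z j :=
          (tendsto_pi_nhds.1 hπz j).eventually ((isOpen_discrete {π z j}).mem_nhds rfl)
        obtain ⟨M, hM⟩ := eventually_atTop.1 h1
        obtain ⟨i, hii, hi⟩ := hconv (max M j)
        rw [← hM (i + 1) (by omega), Hx p (i + 1) j (by omega), S1, if_neg hi]
        exact ((hnx i (p (i + 1)) _ (SP p i).1).2.2.2.2.2.1 j (by omega)).symm
      rw [this]
      exact hπX z
  refine ⟨H, fun pn => pn.2, ?_, continuous_snd.continuousOn, fun p _ => Hdom p, ?_⟩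
  · apply Continuous.continuousOn
    refine continuous_pi fun i => cnd_cont _ (i + 1) ?_
    intro p q h
    simp only [H]
    rw [Sdep p q i h]
  · rintro p - n hn ⟨N, hN⟩
    exact (Hlim p n N hN).2 hn

theorem cnd_main (f : (ℕ → ℕ) → Set ℕ) (π : (ℕ → ℕ) → (ℕ → ℕ)) (hπ : Continuous π)
    (hr : range π = domFO f) (hns : ¬ CndSmall f (domFO f)) : RedFOFO Pi02ACCN f := by
  have hπX : ∀ z, π z ∈ domFO f := fun z => hr ▸ mem_range_self z
  let B := TopologicalSpace.countableBasis (ℕ → ℕ)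
  have hB : TopologicalSpace.IsTopologicalBasis B := TopologicalSpace.isBasis_countableBasis _
  let Bs : Set (Set (ℕ → ℕ)) := {U | U ∈ B ∧ CndSmall f (π '' U)}
  have hBs : Bs.Countable := (TopologicalSpace.countable_countableBasis _).mono fun U hU => hU.1
  let Z : Set (ℕ → ℕ) := {z | ∀ U ∈ Bs, z ∉ U}
  have hZc : CndSmall f (π '' Zᶜ) := by
    refine cnd_small_union f Bs hBs (fun U => π '' U) (fun U hU => hU.2) _ ?_
    rintro _ ⟨z, hz, rfl⟩
    have : ∃ U ∈ Bs, z ∈ U := by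
      by_contra hcon
      push Not at hcon
      exact hz hcon
    obtain ⟨U, hU, hzU⟩ := this
    exact ⟨U, hU, z, hzU, rfl⟩
  have hZne : Z.Nonempty := by
    by_contra hne
    rw [not_nonempty_iff_eq_empty] at hne
    apply hns
    rw [hne, compl_empty, image_univ, hr] at hZc
    exact hZc
  have hkey : ∀ z ∈ Z, ∀ m k : ℕ, ∃ x, x ∈ domFO f ∧ k ∉ f x ∧
      x ∈ closure (π '' {w | w ∈ Z ∧ ∀ j < m, w j = z j}) := by
    intro z hz m k
    by_contra hcon
    push Not at hcon
    obtain ⟨U, hU, hzU, hUV⟩ := hB.mem_nhds_iff.1 (cnd_ev z m)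
    refine hz U ⟨hU, ?_⟩ hzU
    refine cnd_small_union f (univ : Set Bool) (countable_univ)
      (fun b => if b then π '' Zᶜ else π '' {w | w ∈ Z ∧ ∀ j < m, w j = z j}) ?_ _ ?_
    · rintro (_ | _) -
      · refine ⟨{(closure (π '' {w | w ∈ Z ∧ ∀ j < m, w j = z j}), k)}, countable_singleton _,
          ?_, ?_⟩
        · rintro c rfl
          refine ⟨isClosed_closure, fun x hx hd => ?_⟩
          by_contra hk
          exact hcon x hd hk hx
        · intro y hy
          exact ⟨_, rfl, subset_closure (by simpa using hy)⟩
      · simpa using hZc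
    · rintro _ ⟨w, hw, rfl⟩
      by_cases hwZ : w ∈ Z
      · refine ⟨false, mem_univ _, ?_⟩
        simp only [Bool.false_eq_true, if_false]
        exact ⟨w, ⟨hwZ, hUV hw⟩, rfl⟩
      · refine ⟨true, mem_univ _, ?_⟩
        simp only [if_true]
        exact ⟨w, hwZ, rfl⟩
  refine cnd_construct f π hπ hπX
    (fun s => s.z ∈ Z ∧ s.x ∈ closure (π '' {w | w ∈ Z ∧ ∀ j < s.m, w j = s.z j})) Z ?_ ?_
  · intro k
    obtain ⟨z, hz⟩ := hZne
    obtain ⟨x, hx1, hx2, hx3⟩ := hkey z hz 0 k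
    exact ⟨⟨z, 0, x⟩, ⟨hz, hx3⟩, hx1, hx2⟩
  · rintro i k ⟨z, m, x⟩ ⟨hz, hx⟩
    obtain ⟨_, h1, z', ⟨hz', hzz⟩, rfl⟩ := mem_closure_iff_nhds.1 hx _ (cnd_ev x (i + 1))
    have h1 : ∀ j < i + 1, π z' j = x j := h1
    obtain ⟨N, hN⟩ := cnd_sub ((hπ.tendsto z').eventually (cnd_ev (π z') (i + 1)))
    have hN : ∀ w : ℕ → ℕ, (∀ j < N, w j = z' j) → ∀ j < i + 1, π w j = π z' j := hN
    obtain ⟨x', hx1, hx2, hx3⟩ := hkey z' hz' (max (m + 1) N) k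
    have hx4 : ∀ j < i + 1, x' j = π z' j := by
      obtain ⟨_, h2, w, ⟨_, hw⟩, rfl⟩ := mem_closure_iff_nhds.1 hx3 _ (cnd_ev x' (i + 1))
      have h2 : ∀ j < i + 1, π w j = x' j := h2
      intro j hj
      rw [← h2 j hj]
      exact hN w (fun l hl => hw l (lt_of_lt_of_le hl (le_max_right _ _))) j hj
    refine ⟨⟨z', max (m + 1) N, x'⟩, ⟨hz', hx3⟩, hx1, hx2, hzz, ?_, ?_, ?_⟩
    · exact lt_of_lt_of_le (Nat.lt_succ_self m) (le_max_left _ _)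
    · exact fun j hj => (hx4 j (by omega)).symm
    · exact fun j hj => (hx4 j (by omega)).trans (h1 j (by omega))

theorem cn_dichotomy_borel (f : (ℕ → ℕ) → Set ℕ)
    (hBorel : ∀ n : ℕ, @MeasurableSet (ℕ → ℕ) (borel (ℕ → ℕ)) {p : ℕ → ℕ | n ∈ f p}) :
    Xor' (RedFOFO f CN) (RedFOFO Pi02ACCN f) := by
  by_cases hsm : CndSmall f (domFO f)
  · have h1 := cnd_red_of_small f hsm
    exact Or.inl ⟨h1, fun h2 => cnd_not_both f h1 h2⟩
  · have hd : domFO f = ⋃ n, {p : ℕ → ℕ | n ∈ f p} := by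
      ext p
      simp [domFO, ← nonempty_iff_ne_empty, Set.Nonempty]
    have han : MeasureTheory.AnalyticSet (domFO f) := by
      rw [hd]
      refine MeasureTheory.AnalyticSet.iUnion fun n => ?_
      exact @MeasurableSet.analyticSet _ _ _ (borel (ℕ → ℕ)) (@BorelSpace.mk _ _ (borel _) rfl) _ (hBorel n)
    have h2 : RedFOFO Pi02ACCN f := by
      rw [MeasureTheory.AnalyticSet] at han
      rcases han with h0 | ⟨π, hπ, hr⟩
      · exfalso
        apply hsm
        rw [h0]
        exact ⟨∅, countable_empty, by simp, by simp⟩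
      · exact cnd_main f π hπ hr hsm
    exact Or.inr ⟨h2, fun h1 => cnd_not_both f h1 h2⟩
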